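/- arXiv:1208.4584 — 3 statements merged into one kernel-verified Lean document; each statement's English description precedes it below -/
import Mathlib

section
/- Let g ∈ ℂ[x,y] be a non-constant polynomial, ĥ ∈ ℂ[t] a one-variable polynomial of degree m ≥ 1, and f = ĥ ∘ g ∈ ℂ[x,y] the polynomial obtained by substituting g into ĥ. Then Γ_∞(f) = m · Γ_∞(g), where m · Γ_∞(g) = {m·w : w ∈ Γ_∞(g)}. -/
open scoped Classical

noncomputable section

/-- Dot product on `ℝⁿ`. -/
def dotR {n : ℕ} (u v : Fin n → ℝ) : ℝ := ∑ i, u i * v i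

/-- The image in `ℝⁿ` of the support of a polynomial. -/
def realSupp {n : ℕ} (f : MvPolynomial (Fin n) ℂ) : Set (Fin n → ℝ) :=
  (fun v : Fin n →₀ ℕ => fun i => (v i : ℝ)) '' {v | MvPolynomial.coeff v f ≠ 0}

/-- The Newton polyhedron at infinity `Γ_∞(f)`. -/
def NPinf {n : ℕ} (f : MvPolynomial (Fin n) ℂ) : Set (Fin n → ℝ) :=
  convexHull ℝ ({0} ∪ realSupp f)

/-- The supporting face `γ_u` of `u` in `Γ_∞(f)`. -/
def suppFace {n : ℕ} (f : MvPolynomial (Fin n) ℂ) (u : Fin n → ℝ) : Set (Fin n → ℝ) :=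
  {v ∈ NPinf f | ∀ w ∈ NPinf f, dotR u v ≤ dotR u w}

/-- A face of `Γ_∞(f)` is any set of the form `γ_u`. -/
def IsFaceOf {n : ℕ} (f : MvPolynomial (Fin n) ℂ) (γ : Set (Fin n → ℝ)) : Prop :=
  ∃ u : Fin n → ℝ, γ = suppFace f u

/-- Dimension of a subset of `ℝⁿ`: the dimension of its affine span. -/
def setDim {n : ℕ} (s : Set (Fin n → ℝ)) : ℕ :=
  Module.finrank ℝ (affineSpan ℝ s).direction

/-- A face `γ` of `Γ_∞(f)` with `0 ∈ γ` is atypical if some facet of `Γ_∞(f)`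
containing `γ` has all its nonzero inner conormal vectors outside `ℝ_{≥0}ⁿ`. -/
def IsAtypicalFace {n : ℕ} (f : MvPolynomial (Fin n) ℂ) (γ : Set (Fin n → ℝ)) : Prop :=
  IsFaceOf f γ ∧ (0 : Fin n → ℝ) ∈ γ ∧
    ∃ Γf : Set (Fin n → ℝ), IsFaceOf f Γf ∧ setDim Γf = n - 1 ∧ γ ⊆ Γf ∧
      ∀ u : Fin n → ℝ, u ≠ 0 → suppFace f u = Γf → ¬ (∀ i, 0 ≤ u i)

/-- The cone `σ(γ)` of the dual fan of `Γ_∞(f)` corresponding to the face `γ`. -/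
def sigmaCone {n : ℕ} (f : MvPolynomial (Fin n) ℂ) (γ : Set (Fin n → ℝ)) : Set (Fin n → ℝ) :=
  closure {u : Fin n → ℝ | suppFace f u = γ}

/-- The coordinate subspace `ℝ^S` of `ℝⁿ`. -/
def coordSub {n : ℕ} (S : Finset (Fin n)) : Set (Fin n → ℝ) :=
  {v | ∀ i ∉ S, v i = 0}

/-- The `γ`-part `f_γ` of `f`. -/
def facePart {n : ℕ} (f : MvPolynomial (Fin n) ℂ) (γ : Set (Fin n → ℝ)) :
    MvPolynomial (Fin n) ℂ :=
  ∑ v ∈ f.support,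
    if (fun i => (v i : ℝ)) ∈ γ then MvPolynomial.monomial v (MvPolynomial.coeff v f) else 0

/-- `f` is non-degenerate at infinity. -/
def NondegAtInfty {n : ℕ} (f : MvPolynomial (Fin n) ℂ) : Prop :=
  ∀ γ : Set (Fin n → ℝ), IsFaceOf f γ → (0 : Fin n → ℝ) ∉ γ →
    ∀ x : Fin n → ℂ, (∀ i, x i ≠ 0) → MvPolynomial.eval x (facePart f γ) = 0 →
      ∃ i, MvPolynomial.eval x (MvPolynomial.pderiv i (facePart f γ)) ≠ 0

/-- `Δ_γ`: the convex hull of `{0} ∪ γ`. -/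
def DeltaG {n : ℕ} (γ : Set (Fin n → ℝ)) : Set (Fin n → ℝ) :=
  convexHull ℝ ({0} ∪ γ)

/-- The lattice `M_γ = ℤⁿ ∩ L(Δ_γ)`. -/
def Mgamma {n : ℕ} (γ : Set (Fin n → ℝ)) : AddSubgroup (Fin n → ℤ) where
  carrier := {v | (fun i => (v i : ℝ)) ∈ Submodule.span ℝ (DeltaG γ)}
  add_mem' := by
    intro a b ha hb
    have h : (fun i => (((a + b) : Fin n → ℤ) i : ℝ))
        = (fun i => (a i : ℝ)) + fun i => (b i : ℝ) := by
      funext i; push_cast [Pi.add_apply]; ring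
    simp only [Set.mem_setOf_eq, h]
    exact Submodule.add_mem _ ha hb
  zero_mem' := by
    have h : (fun i => (((0 : Fin n → ℤ)) i : ℝ)) = (0 : Fin n → ℝ) := by
      funext i; simp
    simp only [Set.mem_setOf_eq, h]
    exact Submodule.zero_mem _
  neg_mem' := by
    intro a ha
    have h : (fun i => (((-a) : Fin n → ℤ) i : ℝ)) = -(fun i => (a i : ℝ)) := by
      funext i; push_cast [Pi.neg_apply]; ring
    simp only [Set.mem_setOf_eq, h]
    exact Submodule.neg_mem _ ha


/-- The embedding of exponents into real vectors. -/
def rv {n : ℕ} (v : Fin n →₀ ℕ) : Fin n → ℝ := fun i => (v i : ℝ)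

theorem rv_add {n : ℕ} (a b : Fin n →₀ ℕ) : rv (a + b) = rv a + rv b := by
  funext i; simp [rv]

theorem rv_nsmul {n : ℕ} (k : ℕ) (a : Fin n →₀ ℕ) : rv (k • a) = (k : ℝ) • rv a := by
  funext i; simp [rv]

theorem rv_inj {n : ℕ} {a b : Fin n →₀ ℕ} (h : rv a = rv b) : a = b := by
  ext i
  have := congrFun h i
  simpa [rv] using this

theorem NPinf_convex {n : ℕ} (g : MvPolynomial (Fin n) ℂ) : Convex ℝ (NPinf g) :=
  convex_convexHull ℝ _

theorem NPinf_zero_mem {n : ℕ} (g : MvPolynomial (Fin n) ℂ) : (0 : Fin n → ℝ) ∈ NPinf g :=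
  subset_convexHull ℝ _ (by simp)

theorem NPinf_mem {n : ℕ} {g : MvPolynomial (Fin n) ℂ} {v : Fin n →₀ ℕ}
    (h : MvPolynomial.coeff v g ≠ 0) : rv v ∈ NPinf g :=
  subset_convexHull ℝ _ (Or.inr ⟨v, h, rfl⟩)

theorem NPgen_finite {n : ℕ} (g : MvPolynomial (Fin n) ℂ) :
    ({0} ∪ realSupp g : Set (Fin n → ℝ)).Finite := by
  refine (Set.finite_singleton _).union (Set.Finite.image _ ?_)
  refine g.support.finite_toSet.subset ?_
  intro v hv
  simpa using hv

open scoped Pointwise in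
theorem NP_pow_mem {n : ℕ} (g : MvPolynomial (Fin n) ℂ) (k : ℕ) :
    ∀ v : Fin n →₀ ℕ, MvPolynomial.coeff v (g ^ k) ≠ 0 → rv v ∈ (k : ℝ) • NPinf g := by
  induction k with
  | zero =>
    intro v hv
    have h0 : v = 0 := by
      by_contra h
      apply hv
      rw [pow_zero, MvPolynomial.coeff_one, if_neg (Ne.symm h)]
    subst h0
    refine ⟨0, NPinf_zero_mem g, ?_⟩
    funext i; simp [rv]
  | succ k ih =>
    intro v hv
    rw [pow_succ, MvPolynomial.coeff_mul] at hv
    obtain ⟨⟨a, b⟩, hab, hne⟩ := Finset.exists_ne_zero_of_sum_ne_zero hv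
    rw [Finset.HasAntidiagonal.mem_antidiagonal] at hab
    simp only at hab hne
    rw [← hab, rv_add]
    push_cast
    rw [(NPinf_convex g).add_smul (Nat.cast_nonneg k) zero_le_one, one_smul]
    exact Set.add_mem_add (ih a (left_ne_zero_of_mul hne)) (NPinf_mem (right_ne_zero_of_mul hne))

open scoped Pointwise in
theorem ext_split {E : Type*} [AddCommGroup E] [Module ℝ E] {P : Set E} {e : E}
    (he : e ∈ P.extremePoints ℝ) {a b : ℝ} (ha : 0 < a) (hb : 0 < b) {x y : E}
    (hx : x ∈ a • P) (hy : y ∈ b • P) (h : x + y = (a + b) • e) : x = a • e ∧ y = b • e := by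
  obtain ⟨p, hp, rfl⟩ := hx
  obtain ⟨q, hq, rfl⟩ := hy
  have hab : a + b ≠ 0 := by positivity
  have hseg : e ∈ openSegment ℝ p q := by
    refine ⟨a / (a + b), b / (a + b), by positivity, by positivity, by field_simp, ?_⟩
    have : e = (a + b)⁻¹ • (a • p + b • q) := by
      rw [show a • p + b • q = (a + b) • e from h, smul_smul, inv_mul_cancel₀ hab, one_smul]
    rw [this, smul_add, smul_smul, smul_smul]
    congr 2 <;> ring
  have h1 := he.2 hp hq hseg
  have h2 := he.2 hq hp (by rwa [openSegment_symm])
  subst h1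
  subst h2
  exact ⟨rfl, rfl⟩

theorem coeff_pow_ext {n : ℕ} (g : MvPolynomial (Fin n) ℂ) (e : Fin n →₀ ℕ)
    (he : rv e ∈ (NPinf g).extremePoints ℝ) (k : ℕ) :
    MvPolynomial.coeff (k • e) (g ^ k) = MvPolynomial.coeff e g ^ k := by
  induction k with
  | zero => simp
  | succ k ih =>
    rw [pow_succ, MvPolynomial.coeff_mul, Finset.sum_eq_single (k • e, e)]
    · simp only [ih, pow_succ]
    · rintro ⟨a, b⟩ hab hne
      rw [Finset.HasAntidiagonal.mem_antidiagonal] at hab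
      simp only at hab ⊢
      by_contra hz
      have ha := NP_pow_mem g k a (left_ne_zero_of_mul hz)
      have hb := NP_pow_mem g 1 b (by simpa using right_ne_zero_of_mul hz)
      apply hne
      rcases Nat.eq_zero_or_pos k with rfl | hk
      · obtain ⟨p, -, hp⟩ := ha
        have h0 : a = 0 := rv_inj (by rw [← hp]; funext i; simp [rv])
        subst h0
        simpa using hab
      · have hs : rv a + rv b = ((k : ℝ) + ((1 : ℕ) : ℝ)) • rv e := by
          rw [← rv_add, hab, rv_nsmul]; push_cast; rfl
        obtain ⟨h1, h2⟩ := ext_split he (by exact_mod_cast hk) (by norm_num) ha hb hs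
        rw [← rv_nsmul] at h1 h2
        rw [rv_inj h1, rv_inj h2, one_smul]
    · intro h
      exact absurd (by rw [Finset.HasAntidiagonal.mem_antidiagonal]; simp [add_smul]) h

theorem coeff_pow_ext_lt {n : ℕ} (g : MvPolynomial (Fin n) ℂ) (e : Fin n →₀ ℕ)
    (he : rv e ∈ (NPinf g).extremePoints ℝ) (he0 : rv e ≠ 0) (k m : ℕ) (hkm : k < m) :
    MvPolynomial.coeff (m • e) (g ^ k) = 0 := by
  by_contra hz
  have hx := NP_pow_mem g k _ hz
  have hm : (m : ℝ) ≠ 0 := by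
    have : m ≠ 0 := by omega
    exact_mod_cast this
  rcases Nat.eq_zero_or_pos k with rfl | hk
  · obtain ⟨p, -, hp⟩ := hx
    rw [rv_nsmul] at hp
    simp only [Nat.cast_zero, zero_smul] at hp
    exact (smul_ne_zero hm he0) hp.symm
  · have hpos : (0 : ℝ) < (m : ℝ) - k := by
      have : (k : ℝ) < m := by exact_mod_cast hkm
      linarith
    obtain ⟨-, h2⟩ := ext_split he (by exact_mod_cast hk) hpos hx
      (y := 0) ⟨0, NPinf_zero_mem g, smul_zero _⟩
      (by rw [add_zero, rv_nsmul]; congr 1; ring)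
    exact (smul_ne_zero hpos.ne' he0) h2.symm

open scoped Pointwise in
/-- If `g ∈ ℂ[x,y]` is non-constant, `ĥ ∈ ℂ[t]` has degree `m ≥ 1` and `f = ĥ ∘ g`, then
`Γ_∞(f) = m · Γ_∞(g)`. -/
theorem NPinf_comp (g : MvPolynomial (Fin 2) ℂ) (hg : 0 < g.totalDegree)
    (hhat : Polynomial ℂ) (m : ℕ) (hm : 1 ≤ m) (hdeg : hhat.natDegree = m)
    (f : MvPolynomial (Fin 2) ℂ) (hf : f = Polynomial.aeval g hhat) :
    NPinf f = (m : ℝ) • NPinf g := by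
  have hm0 : (0 : ℝ) < m := by exact_mod_cast hm
  have hlead : hhat.coeff m ≠ 0 := by
    rw [← hdeg]
    apply Polynomial.leadingCoeff_ne_zero.mpr
    rintro rfl
    simp at hdeg
    omega
  have hcoeff : ∀ v, MvPolynomial.coeff v f =
      ∑ k ∈ Finset.range (m + 1), hhat.coeff k * MvPolynomial.coeff v (g ^ k) := by
    intro v
    rw [hf, Polynomial.aeval_eq_sum_range, hdeg, MvPolynomial.coeff_sum]
    simp
  apply Set.Subset.antisymm
  · refine convexHull_min ?_ ((NPinf_convex g).smul _)
    rintro x (hx | ⟨v, hv, rfl⟩)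
    · rw [Set.mem_singleton_iff.mp hx]
      exact ⟨0, NPinf_zero_mem g, smul_zero _⟩
    · change MvPolynomial.coeff v f ≠ 0 at hv
      rw [hcoeff] at hv
      obtain ⟨k, hk, hne⟩ := Finset.exists_ne_zero_of_sum_ne_zero hv
      obtain ⟨p, hp, hpe⟩ := NP_pow_mem g k v (right_ne_zero_of_mul hne)
      have hk' : (k : ℝ) ≤ m := by
        have := Finset.mem_range.mp hk
        exact_mod_cast (by omega : k ≤ m)
      refine ⟨((k : ℝ) / m) • p, (NPinf_convex g).smul_mem_of_zero_mem (NPinf_zero_mem g) hp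
        ⟨by positivity, (div_le_one hm0).mpr hk'⟩, ?_⟩
      change (m : ℝ) • ((k : ℝ) / m) • p = rv v
      rw [← hpe, smul_smul, mul_div_cancel₀ _ hm0.ne']
  · have hsub : (NPinf g).extremePoints ℝ ⊆ {0} ∪ realSupp g := extremePoints_convexHull_subset
    have hfin := (NPgen_finite g).subset hsub
    have hKM : convexHull ℝ ((NPinf g).extremePoints ℝ) = NPinf g := by
      have h := closure_convexHull_extremePoints (s := NPinf g)
        ((NPgen_finite g).isCompact_convexHull ℝ) (NPinf_convex g)
      rwa [(hfin.isClosed_convexHull ℝ).closure_eq] at h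
    rw [← hKM, ← convexHull_smul]
    refine convexHull_min ?_ (NPinf_convex f)
    rintro _ ⟨x, hx, rfl⟩
    change (m : ℝ) • x ∈ NPinf f
    by_cases hx0 : x = 0
    · rw [hx0, smul_zero]; exact NPinf_zero_mem f
    rcases hsub hx with h | ⟨e, he, rfl⟩
    · exact absurd h hx0
    change MvPolynomial.coeff e g ≠ 0 at he
    change rv e ∈ _ at hx
    change rv e ≠ 0 at hx0
    change (m : ℝ) • rv e ∈ _
    rw [← rv_nsmul]
    apply NPinf_mem
    rw [hcoeff, Finset.sum_range_succ, Finset.sum_eq_zero, zero_add, coeff_pow_ext g e hx]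
    · exact mul_ne_zero hlead (pow_ne_zero _ he)
    · intro k hk
      rw [coeff_pow_ext_lt g e hx hx0 k m (Finset.mem_range.mp hk), mul_zero]
end
end

section
/- Let g ∈ ℂ[x,y] be a non-constant polynomial, ĥ(t) = Σ_{k=0}^m c_k t^k ∈ ℂ[t] with c_m ≠ 0 and m ≥ 1, and f = ĥ ∘ g ∈ ℂ[x,y]. Let u ∈ ℝ² be such that μ := min_{w ∈ Γ_∞(g)} ⟨u,w⟩ < 0, let γ̃ = {v ∈ Γ_∞(g) : ⟨u,v⟩ = μ} be the supporting face of u in Γ_∞(g), and let γ be the supporting face of u in Γ_∞(f). Then min_{w ∈ Γ_∞(f)} ⟨u,w⟩ = m·μ, γ = m·γ̃ = {m·w : w ∈ γ̃}, and f_γ = c_m · (g_{γ̃})^m. -/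
open scoped Classical

noncomputable section

abbrev rvec {n : ℕ} (d : Fin n →₀ ℕ) : Fin n → ℝ := fun i => (d i : ℝ)

theorem weight_eq_dotR {n : ℕ} (u : Fin n → ℝ) (d : Fin n →₀ ℕ) :
    Finsupp.weight u d = dotR u (rvec d) := by
  rw [Finsupp.weight_apply, Finsupp.sum_fintype _ _ (by simp)]
  simp [dotR, rvec, mul_comm]

def WB {n : ℕ} (u : Fin n → ℝ) (a : ℝ) (p : MvPolynomial (Fin n) ℂ) : Prop :=
  ∀ d, MvPolynomial.coeff d p ≠ 0 → a ≤ Finsupp.weight u d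

theorem WB.mul {n : ℕ} {u : Fin n → ℝ} {a b : ℝ} {p q : MvPolynomial (Fin n) ℂ}
    (hp : WB u a p) (hq : WB u b q) : WB u (a + b) (p * q) := by
  intro d hd
  rw [MvPolynomial.coeff_mul] at hd
  obtain ⟨x, hx, hne⟩ := Finset.exists_ne_zero_of_sum_ne_zero hd
  have h1 := hp x.1 (left_ne_zero_of_mul hne)
  have h2 := hq x.2 (right_ne_zero_of_mul hne)
  rw [← Finset.HasAntidiagonal.mem_antidiagonal.1 hx, map_add]
  linarith

theorem comp_mul {n : ℕ} {u : Fin n → ℝ} {a b : ℝ} {p q : MvPolynomial (Fin n) ℂ}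
    (hp : WB u a p) (hq : WB u b q) :
    MvPolynomial.weightedHomogeneousComponent u (a + b) (p * q) =
      MvPolynomial.weightedHomogeneousComponent u a p *
        MvPolynomial.weightedHomogeneousComponent u b q := by
  ext d
  rw [MvPolynomial.coeff_weightedHomogeneousComponent, MvPolynomial.coeff_mul,
    MvPolynomial.coeff_mul, ← Finset.sum_filter_add_sum_filter_not _ (fun _ => True)]
  simp only [Finset.filter_true, not_true_eq_false, Finset.filter_false, Finset.sum_empty,
    add_zero, MvPolynomial.coeff_weightedHomogeneousComponent]
  split_ifs with h
  · refine Finset.sum_congr rfl fun x hx => ?_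
    rw [← Finset.HasAntidiagonal.mem_antidiagonal.1 hx, map_add] at h
    by_cases h1 : MvPolynomial.coeff x.1 p = 0
    · simp [h1]
    by_cases h2 : MvPolynomial.coeff x.2 q = 0
    · simp [h2]
    have h1' := hp _ h1
    have h2' := hq _ h2
    rw [if_pos (by linarith), if_pos (by linarith)]
  · symm
    refine Finset.sum_eq_zero fun x hx => ?_
    rw [← Finset.HasAntidiagonal.mem_antidiagonal.1 hx, map_add] at h
    by_cases h1 : Finsupp.weight u x.1 = a
    · rw [if_neg (c := Finsupp.weight u x.2 = b) (fun h2 => h (by rw [h1, h2])), mul_zero]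
    · rw [if_neg h1, zero_mul]

theorem pow_aux {n : ℕ} {u : Fin n → ℝ} {a : ℝ} {p : MvPolynomial (Fin n) ℂ}
    (hp : WB u a p) (k : ℕ) : WB u (k * a) (p ^ k) ∧
    MvPolynomial.weightedHomogeneousComponent u (k * a) (p ^ k) =
      MvPolynomial.weightedHomogeneousComponent u a p ^ k := by
  induction k with
  | zero =>
    constructor
    · intro d hd
      rw [pow_zero, MvPolynomial.coeff_one] at hd
      have : (0 : Fin n →₀ ℕ) = d := by by_contra h; simp [h] at hd
      simp [← this]
    · ext d
      rw [MvPolynomial.coeff_weightedHomogeneousComponent, pow_zero, pow_zero,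
        MvPolynomial.coeff_one]
      by_cases h : (0 : Fin n →₀ ℕ) = d
      · simp [← h]
      · simp [h]
  | succ k ih =>
    have e : ((k + 1 : ℕ) : ℝ) * a = k * a + a := by push_cast; ring
    rw [e, pow_succ, pow_succ]
    exact ⟨ih.1.mul hp, by rw [comp_mul ih.1 hp, ih.2]⟩

theorem aeval_sum {n : ℕ} (g : MvPolynomial (Fin n) ℂ) (h : Polynomial ℂ) :
    Polynomial.aeval g h =
      ∑ k ∈ Finset.range (h.natDegree + 1), MvPolynomial.C (h.coeff k) * g ^ k := by
  rw [Polynomial.aeval_eq_sum_range]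
  simp [MvPolynomial.smul_eq_C_mul]

theorem f_WB {n : ℕ} {u : Fin n → ℝ} {a : ℝ} (ha : a ≤ 0) {g : MvPolynomial (Fin n) ℂ}
    (hg : WB u a g) (h : Polynomial ℂ) :
    WB u (h.natDegree * a) (Polynomial.aeval g h) := by
  intro d hd
  rw [aeval_sum, MvPolynomial.coeff_sum] at hd
  obtain ⟨k, hk, hne⟩ := Finset.exists_ne_zero_of_sum_ne_zero hd
  rw [MvPolynomial.coeff_C_mul] at hne
  refine le_trans ?_ ((pow_aux hg k).1 d (right_ne_zero_of_mul hne))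
  have : (k : ℝ) ≤ h.natDegree := by
    exact_mod_cast Nat.lt_succ_iff.1 (Finset.mem_range.1 hk)
  nlinarith

theorem f_comp {n : ℕ} {u : Fin n → ℝ} {a : ℝ} (ha : a < 0) {g : MvPolynomial (Fin n) ℂ}
    (hg : WB u a g) (h : Polynomial ℂ) :
    MvPolynomial.weightedHomogeneousComponent u (h.natDegree * a) (Polynomial.aeval g h) =
      MvPolynomial.C (h.coeff h.natDegree) *
        MvPolynomial.weightedHomogeneousComponent u a g ^ h.natDegree := by
  rw [aeval_sum, map_sum, Finset.sum_range_succ, Finset.sum_eq_zero, zero_add,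
    MvPolynomial.weightedHomogeneousComponent_C_mul, (pow_aux hg _).2]
  intro k hk
  rw [MvPolynomial.weightedHomogeneousComponent_C_mul]
  have : MvPolynomial.weightedHomogeneousComponent u (h.natDegree * a) (g ^ k) = 0 := by
    ext d
    rw [MvPolynomial.coeff_weightedHomogeneousComponent, MvPolynomial.coeff_zero]
    split_ifs with hw
    · by_contra hne
      have h1 := (pow_aux hg k).1 d hne
      have : (k : ℝ) < h.natDegree := by exact_mod_cast Finset.mem_range.1 hk
      nlinarith
    · rfl
  rw [this, mul_zero]

theorem dotR_smul {n : ℕ} (u v : Fin n → ℝ) (c : ℝ) : dotR u (c • v) = c * dotR u v := by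
  simp only [dotR, Finset.mul_sum, Pi.smul_apply, smul_eq_mul]
  exact Finset.sum_congr rfl fun i _ => by ring

theorem functional_eq {n : ℕ} (l : (Fin n → ℝ) →L[ℝ] ℝ) :
    ∃ u : Fin n → ℝ, ∀ x, l x = dotR u x := by
  refine ⟨fun i => l (Pi.single i 1), fun x => ?_⟩
  have := LinearMap.pi_apply_eq_sum_univ l.toLinearMap x
  simp only [ContinuousLinearMap.coe_coe, smul_eq_mul] at this
  rw [this, dotR]
  refine Finset.sum_congr rfl fun i _ => ?_
  rw [mul_comm]
  congr 2
  funext j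
  simp [Pi.single_apply, eq_comm]

theorem S_finite {n : ℕ} (f : MvPolynomial (Fin n) ℂ) : ({0} ∪ realSupp f).Finite := by
  refine (Set.finite_singleton _).union (Set.Finite.image _ ?_)
  exact f.support.finite_toSet.subset fun d hd => by simpa using hd

theorem NP_closed {n : ℕ} (f : MvPolynomial (Fin n) ℂ) : IsClosed (NPinf f) :=
  (S_finite f).isClosed_convexHull ℝ

theorem supp_mem {n : ℕ} {f : MvPolynomial (Fin n) ℂ} {d} (hd : MvPolynomial.coeff d f ≠ 0) :
    rvec d ∈ NPinf f :=
  subset_convexHull ℝ _ (Or.inr ⟨d, hd, rfl⟩)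

theorem zero_mem_NP {n : ℕ} (f : MvPolynomial (Fin n) ℂ) : (0 : Fin n → ℝ) ∈ NPinf f :=
  subset_convexHull ℝ _ (Or.inl rfl)

theorem exists_min {n : ℕ} (u : Fin n → ℝ) (g : MvPolynomial (Fin n) ℂ) :
    ∃ ν ≤ 0, (∃ s ∈ NPinf g, dotR u s = ν) ∧ WB u ν g ∧
      (ν < 0 → MvPolynomial.weightedHomogeneousComponent u ν g ≠ 0) := by
  obtain ⟨s, hs, hmin⟩ := Set.exists_min_image _ (dotR u) (S_finite g) ⟨0, Or.inl rfl⟩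
  have h0 := hmin 0 (Or.inl rfl)
  have h00 : dotR u 0 = 0 := by simp [dotR]
  refine ⟨dotR u s, by linarith, ⟨s, subset_convexHull ℝ _ hs, rfl⟩, ?_, ?_⟩
  · intro d hd
    rw [weight_eq_dotR]
    exact hmin _ (Or.inr ⟨d, hd, rfl⟩)
  · intro hneg hz
    rcases hs with hs | ⟨d, hd, rfl⟩
    · rw [Set.mem_singleton_iff.1 hs] at hneg; linarith
    · apply hd
      have := congrArg (MvPolynomial.coeff d) hz
      rwa [MvPolynomial.coeff_weightedHomogeneousComponent, MvPolynomial.coeff_zero,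
        if_pos (weight_eq_dotR u d)] at this

open scoped Pointwise in
theorem NP_comp {n : ℕ} (g : MvPolynomial (Fin n) ℂ) (h : Polynomial ℂ)
    (hm : 1 ≤ h.natDegree) (hc : h.coeff h.natDegree ≠ 0) :
    NPinf (Polynomial.aeval g h) = (h.natDegree : ℝ) • NPinf g := by
  have hm0 : (0 : ℝ) < h.natDegree := by exact_mod_cast hm
  apply Set.Subset.antisymm
  · apply convexHull_min _ ((convex_convexHull ℝ _).smul _)
    rintro _ (rfl | ⟨d, hd, rfl⟩)
    · exact ⟨0, zero_mem_NP g, by simp⟩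
    by_contra hcon
    obtain ⟨l, c, hl1, hl2⟩ := geometric_hahn_banach_point_closed
      ((convex_convexHull ℝ _).smul (h.natDegree : ℝ))
      ((NP_closed g).smul_of_ne_zero hm0.ne') hcon
    obtain ⟨u, hu⟩ := functional_eq l
    obtain ⟨ν, hν, ⟨s, hs, hsν⟩, hW, -⟩ := exists_min u g
    have h1 := f_WB hν hW h d hd
    rw [weight_eq_dotR] at h1
    have h2 := hl2 _ ⟨s, hs, rfl⟩
    simp only [hu, dotR_smul, hsν] at h2 hl1
    change dotR u (rvec d) < c at hl1
    linarith
  · unfold NPinf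
    rw [← convexHull_smul]
    apply convexHull_min _ (convex_convexHull ℝ _)
    rintro _ ⟨_, (rfl | ⟨d, hd, rfl⟩), rfl⟩
    · have := zero_mem_NP (Polynomial.aeval g h)
      simp only [smul_zero]
      exact this
    by_contra hcon
    obtain ⟨l, c, hl1, hl2⟩ := geometric_hahn_banach_point_closed
      (convex_convexHull ℝ _) (NP_closed (Polynomial.aeval g h)) hcon
    obtain ⟨u, hu⟩ := functional_eq l
    obtain ⟨ν, hν, -, hW, hne⟩ := exists_min u g
    have h0 := hl2 _ (zero_mem_NP _)
    simp only [hu, dotR_smul] at hl1 hl2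
    simp only [map_zero] at h0
    have hd' := hW d hd
    rw [weight_eq_dotR] at hd'
    change (h.natDegree : ℝ) * dotR u (rvec d) < c at hl1
    have hνneg : ν < 0 := by nlinarith
    have hcomp := f_comp hνneg hW h
    have hne' : MvPolynomial.C (h.coeff h.natDegree) *
        MvPolynomial.weightedHomogeneousComponent u ν g ^ h.natDegree ≠ 0 :=
      mul_ne_zero (by simpa using hc) (pow_ne_zero _ (hne hνneg))
    rw [← hcomp, MvPolynomial.ne_zero_iff] at hne'
    obtain ⟨e, he⟩ := hne'
    rw [MvPolynomial.coeff_weightedHomogeneousComponent] at he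
    split_ifs at he with hw
    · have := hl2 _ (supp_mem he)
      rw [← weight_eq_dotR, hw] at this
      nlinarith
    · exact he rfl

theorem mem_suppFace {n : ℕ} {f : MvPolynomial (Fin n) ℂ} {u : Fin n → ℝ} {μ : ℝ}
    (hmem : ∃ w ∈ NPinf f, dotR u w = μ) (hle : ∀ w ∈ NPinf f, μ ≤ dotR u w) (v) :
    v ∈ suppFace f u ↔ v ∈ NPinf f ∧ dotR u v = μ := by
  obtain ⟨w, hw, rfl⟩ := hmem
  exact ⟨fun h => ⟨h.1, le_antisymm (h.2 w hw) (hle v h.1)⟩,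
    fun h => ⟨h.1, fun x hx => h.2 ▸ hle x hx⟩⟩

theorem facePart_eq {n : ℕ} {f : MvPolynomial (Fin n) ℂ} {u : Fin n → ℝ} {μ : ℝ}
    (hmem : ∃ w ∈ NPinf f, dotR u w = μ) (hle : ∀ w ∈ NPinf f, μ ≤ dotR u w) :
    facePart f (suppFace f u) = MvPolynomial.weightedHomogeneousComponent u μ f := by
  rw [MvPolynomial.weightedHomogeneousComponent_apply, Finset.sum_filter, facePart]
  refine Finset.sum_congr rfl fun d hd => ?_
  have : (fun i => (d i : ℝ)) ∈ suppFace f u ↔ Finsupp.weight u d = μ := by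
    rw [mem_suppFace hmem hle, weight_eq_dotR]
    exact and_iff_right (supp_mem (MvPolynomial.mem_support_iff.1 hd))
  by_cases hw : Finsupp.weight u d = μ
  · rw [if_pos hw, if_pos (this.2 hw)]
  · rw [if_neg hw, if_neg (fun h => hw (this.1 h))]

open scoped Pointwise in
/-- Let `g ∈ ℂ[x,y]` be non-constant, `ĥ(t) = Σ_{k=0}^m c_k t^k` with `c_m ≠ 0`, `m ≥ 1`,
and `f = ĥ ∘ g`. If `u ∈ ℝ²` satisfies `μ := min_{w ∈ Γ_∞(g)} ⟨u,w⟩ < 0`, then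
`min_{w ∈ Γ_∞(f)} ⟨u,w⟩ = m·μ`, the supporting face of `u` in `Γ_∞(f)` is `m` times the one
in `Γ_∞(g)`, and `f_γ = c_m · (g_γ̃)^m`. -/
theorem suppFace_facePart_comp (g : MvPolynomial (Fin 2) ℂ) (hg : 0 < g.totalDegree)
    (hhat : Polynomial ℂ) (m : ℕ) (hm : 1 ≤ m) (hdeg : hhat.natDegree = m)
    (hc : hhat.coeff m ≠ 0)
    (f : MvPolynomial (Fin 2) ℂ) (hf : f = Polynomial.aeval g hhat)
    (u : Fin 2 → ℝ) (μ : ℝ)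
    (hμmem : ∃ w ∈ NPinf g, dotR u w = μ)
    (hμle : ∀ w ∈ NPinf g, μ ≤ dotR u w)
    (hμneg : μ < 0) :
    ((∃ w ∈ NPinf f, dotR u w = (m : ℝ) * μ) ∧ (∀ w ∈ NPinf f, (m : ℝ) * μ ≤ dotR u w)) ∧
    suppFace f u = (m : ℝ) • suppFace g u ∧
    facePart f (suppFace f u) =
      MvPolynomial.C (hhat.coeff m) * (facePart g (suppFace g u)) ^ m := by
  subst hdeg
  subst hf
  have hm0 : (0 : ℝ) < hhat.natDegree := by exact_mod_cast hm
  have hNP := NP_comp g hhat hm hc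
  have A1 : ∃ w ∈ NPinf (Polynomial.aeval g hhat), dotR u w = (hhat.natDegree : ℝ) * μ := by
    obtain ⟨w, hw, rfl⟩ := hμmem
    exact ⟨(hhat.natDegree : ℝ) • w, hNP ▸ ⟨w, hw, rfl⟩, dotR_smul _ _ _⟩
  have A2 : ∀ w ∈ NPinf (Polynomial.aeval g hhat), (hhat.natDegree : ℝ) * μ ≤ dotR u w := by
    rw [hNP]
    rintro _ ⟨w, hw, rfl⟩
    change _ ≤ dotR u ((hhat.natDegree : ℝ) • w)
    rw [dotR_smul]
    exact mul_le_mul_of_nonneg_left (hμle w hw) hm0.le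
  refine ⟨⟨A1, A2⟩, ?_, ?_⟩
  · ext v
    rw [mem_suppFace A1 A2, hNP]
    constructor
    · rintro ⟨⟨w, hw, rfl⟩, h⟩
      change dotR u ((hhat.natDegree : ℝ) • w) = _ at h
      rw [dotR_smul] at h
      exact ⟨w, (mem_suppFace hμmem hμle w).2 ⟨hw, mul_left_cancel₀ hm0.ne' h⟩, rfl⟩
    · rintro ⟨w, hw, rfl⟩
      obtain ⟨h1, h2⟩ := (mem_suppFace hμmem hμle w).1 hw
      exact ⟨⟨w, h1, rfl⟩, by rw [← h2]; exact dotR_smul _ _ _⟩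
  · rw [facePart_eq A1 A2, facePart_eq hμmem hμle]
    refine f_comp hμneg (fun d hd => ?_) hhat
    rw [weight_eq_dotR]
    exact hμle _ (supp_mem hd)
end
end

section
/- Let γ be a face at infinity of Γ_∞(f) (i.e. a face with 0 ∉ γ). Then there exists a unique surjective group homomorphism u_γ : M_γ → ℤ such that the subset of Δ_γ on which the ℝ-linear extension of u_γ to L(Δ_γ) attains its maximum over Δ_γ is exactly γ; moreover the maximum d_γ = max_{w ∈ Δ_γ} u_γ(w) is a (strictly) positive integer. -/
open scoped Classical

noncomputable section

theorem aux_dvd {M : Type*} [AddCommGroup M] (w : M →+ ℤ) (v1 : M) (h1 : w v1 ≠ 0) :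
    ∃ (g : ℤ) (u : M →+ ℤ), 0 < g ∧ Function.Surjective u ∧ ∀ v, w v = g * u v := by
  obtain ⟨a, ha⟩ := Int.subgroup_cyclic w.range
  have hdvd : ∀ v, a ∣ w v := by
    intro v
    have : w v ∈ w.range := ⟨v, rfl⟩
    rw [ha, AddSubgroup.mem_closure_singleton] at this
    obtain ⟨k, hk⟩ := this
    exact ⟨k, by rw [← hk]; simp [mul_comm]⟩
  have ha0 : a ≠ 0 := by
    rintro rfl
    exact h1 (zero_dvd_iff.mp (hdvd v1))
  have hmem : a ∈ w.range := by
    rw [ha]; exact AddSubgroup.subset_closure rfl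
  obtain ⟨v0, hv0⟩ := hmem
  have key : ∃ g : ℤ, 0 < g ∧ (∀ v, g ∣ w v) ∧ ∃ v, w v = g := by
    rcases lt_or_gt_of_ne ha0 with h | h
    · exact ⟨-a, by omega, fun v => (neg_dvd).mpr (hdvd v), -v0, by simp [hv0]⟩
    · exact ⟨a, h, hdvd, v0, hv0⟩
  obtain ⟨g, hg, hd, v2, hv2⟩ := key
  choose q hq using hd
  have hq' : ∀ a b, q (a + b) = q a + q b := by
    intro a b
    have := hq (a + b)
    rw [map_add, hq a, hq b, ← mul_add] at this
    exact (mul_left_cancel₀ hg.ne' this).symm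
  refine ⟨g, AddMonoidHom.mk' q hq', hg, ?_, hq⟩
  have hq2 : q v2 = 1 := by
    have := hq v2
    rw [hv2] at this
    exact (mul_left_cancel₀ hg.ne' (by rw [mul_one]; exact this)).symm
  intro k
  refine ⟨k • v2, ?_⟩
  rw [map_zsmul]
  show k • q v2 = k
  rw [hq2]; simp

theorem aux_ext {n : ℕ} (M : AddSubgroup (Fin n → ℤ)) (u : M →+ ℤ) :
    ∃ ℓ : (Fin n → ℝ) →ₗ[ℝ] ℝ, ∀ v : M, ℓ (fun i => ((v : Fin n → ℤ) i : ℝ)) = u v := by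
  have hB : Module.Baer ℤ ℚ := Module.Baer.of_divisible ℚ
  let M' : Submodule ℤ (Fin n → ℤ) := AddSubgroup.toIntSubmodule M
  let u' : M' →ₗ[ℤ] ℚ := ((Int.castAddHom ℚ).comp u).toIntLinearMap
  obtain ⟨h, hh⟩ := hB.extension_property M'.subtype M'.injective_subtype u'
  let ℓ : (Fin n → ℝ) →ₗ[ℝ] ℝ :=
    ∑ i, ((h (Pi.single i 1) : ℚ) : ℝ) • LinearMap.proj i
  refine ⟨ℓ, fun v => ?_⟩
  have h1 : h (v : Fin n → ℤ) = (u v : ℚ) := LinearMap.congr_fun hh v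
  have h2 : h (v : Fin n → ℤ) = ∑ i, (v : Fin n → ℤ) i • h (Pi.single i 1) := by
    rw [LinearMap.pi_apply_eq_sum_univ h]
    refine Finset.sum_congr rfl fun i _ => ?_
    congr 2
    ext j
    simp [Pi.single_apply, eq_comm]
  rw [h2] at h1
  have h3 : ((∑ i, (v : Fin n → ℤ) i • h (Pi.single i 1) : ℚ) : ℝ) = ((u v : ℚ) : ℝ) := by
    rw [h1]
  push_cast at h3
  rw [← h3]
  simp [ℓ, mul_comm]

theorem aux_clear {n : ℕ} (b : Fin n → ℚ) :
    ∃ (N : ℤ) (c : Fin n → ℤ), 0 < N ∧ ∀ i, (c i : ℚ) = N * b i := by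
  have hN : ∀ i, ∃ c : ℤ, (c : ℚ) = ((∏ j, (b j).den : ℕ) : ℤ) * b i := by
    intro i
    obtain ⟨k, hk⟩ := Finset.dvd_prod_of_mem (fun j => (b j).den) (Finset.mem_univ i)
    refine ⟨k * (b i).num, ?_⟩
    rw [hk]
    push_cast
    rw [mul_comm ((b i).den : ℚ), mul_assoc, Rat.den_mul_eq_num]
  choose c hc using hN
  exact ⟨_, c, by exact_mod_cast Finset.prod_pos fun j _ => (b j).den_pos, hc⟩

theorem aux_pi {n : ℕ} (a : Fin n → ℝ) :
    ∃ (b : Fin n → ℚ), ∀ v : Fin n → ℤ, ∑ i, a i * v i = 1 → ∑ i, b i * v i = 1 := by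
  obtain ⟨π, hπ⟩ := LinearMap.exists_leftInverse_of_injective (Algebra.linearMap ℚ ℝ)
    (LinearMap.ker_eq_bot.mpr (algebraMap ℚ ℝ).injective)
  refine ⟨fun i => π (a i), fun v hv => ?_⟩
  have h1 : π 1 = 1 := by simpa using LinearMap.congr_fun hπ 1
  rw [← h1, ← hv, map_sum]
  refine Finset.sum_congr rfl fun i _ => ?_
  have : a i * (v i : ℝ) = (v i : ℚ) • a i := by
    rw [Rat.smul_def]; push_cast; ring
  rw [this, map_smul, smul_eq_mul, mul_comm]

/-- integer points of the face at which data is concentrated -/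
theorem aux_face {n : ℕ} (f : MvPolynomial (Fin n) ℂ) (u : Fin n → ℝ)
    (h0 : (0 : Fin n → ℝ) ∉ suppFace f u) :
    (∃ m : ℝ, m < 0 ∧ ∀ x ∈ suppFace f u, dotR u x = m) ∧
    (∃ v : Fin n → ℤ, (fun i => (v i : ℝ)) ∈ suppFace f u) ∧
    Convex ℝ (suppFace f u) ∧
    ∀ (ℓ : (Fin n → ℝ) →ₗ[ℝ] ℝ) (d : ℝ),
      (∀ v : Fin n → ℤ, (fun i => (v i : ℝ)) ∈ suppFace f u → ℓ (fun i => (v i : ℝ)) = d) →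
      ∀ x ∈ suppFace f u, ℓ x = d := by
  let D : (Fin n → ℝ) →ₗ[ℝ] ℝ := ∑ i, u i • LinearMap.proj i
  have hD : ∀ x, dotR u x = D x := fun x => by simp [D, dotR]
  have hfin : ({0} ∪ realSupp f).Finite := by
    refine (Set.finite_singleton _).union (Set.Finite.image _ ?_)
    exact f.support.finite_toSet.subset fun v hv => by simpa using hv
  obtain ⟨a, haA, ha⟩ := Set.exists_min_image _ D hfin ⟨0, by simp⟩
  have hge : ∀ w ∈ NPinf f, D a ≤ D w := by
    intro w hw
    exact convexHull_min (t := {w | D a ≤ D w}) ha (convex_halfSpace_ge D.isLinear _) hw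
  have haN : a ∈ NPinf f := subset_convexHull ℝ _ haA
  have haF : a ∈ suppFace f u := ⟨haN, fun w hw => by rw [hD, hD]; exact hge w hw⟩
  have hiff : ∀ x, x ∈ suppFace f u ↔ x ∈ NPinf f ∧ D x = D a := by
    intro x
    constructor
    · rintro ⟨hx, h⟩
      refine ⟨hx, le_antisymm ?_ (hge x hx)⟩
      have := h a haN
      rwa [hD, hD] at this
    · rintro ⟨hx, h⟩
      exact ⟨hx, fun w hw => by rw [hD, hD, h]; exact hge w hw⟩
  have hint : ∀ x ∈ {0} ∪ realSupp f, ∃ v : Fin n → ℤ, x = (fun i => (v i : ℝ)) := by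
    rintro x (hx | ⟨v, -, rfl⟩)
    · rw [Set.mem_singleton_iff] at hx
      exact ⟨0, by rw [hx]; ext; simp⟩
    · exact ⟨fun i => (v i : ℤ), by ext; simp⟩
  have h0N : (0 : Fin n → ℝ) ∈ NPinf f := subset_convexHull ℝ _ (by simp)
  refine ⟨⟨D a, ?_, fun x hx => by rw [hD]; exact ((hiff x).mp hx).2⟩, ?_, ?_, ?_⟩
  · have h1 := hge 0 h0N
    rw [map_zero] at h1
    refine lt_of_le_of_ne h1 fun h => h0 ((hiff 0).mpr ⟨h0N, by rw [h, map_zero]⟩)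
  · obtain ⟨v, hv⟩ := hint a haA
    exact ⟨v, hv ▸ haF⟩
  · have : suppFace f u = NPinf f ∩ {x | D x = D a} := by
      ext x; exact hiff x
    rw [this]
    exact (convex_convexHull ℝ _).inter (convex_hyperplane D.isLinear _)
  · intro ℓ d hℓ x hx
    obtain ⟨hxN, hxa⟩ := (hiff x).mp hx
    obtain ⟨ι, _, w, z, hw, hw1, hz, hsum⟩ := mem_convexHull_iff_exists_fintype.mp hxN
    have hzero : ∑ i, w i * (D (z i) - D a) = 0 := by
      have : D x = ∑ i, w i * D (z i) := by rw [← hsum, map_sum]; simp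
      simp only [mul_sub, Finset.sum_sub_distrib]
      rw [← Finset.sum_mul, hw1, ← this, hxa]; ring
    have hall := (Finset.sum_eq_zero_iff_of_nonneg (fun i _ =>
      mul_nonneg (hw i) (sub_nonneg.mpr (ha _ (hz i))))).mp hzero
    have : ℓ x = ∑ i, w i * ℓ (z i) := by rw [← hsum, map_sum]; simp
    rw [this, ← one_mul d, ← hw1, Finset.sum_mul]
    refine Finset.sum_congr rfl fun i _ => ?_
    rcases mul_eq_zero.mp (hall i (Finset.mem_univ i)) with h | h
    · rw [h]; simp
    · obtain ⟨v, hv⟩ := hint _ (hz i)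
      have hzF : z i ∈ suppFace f u :=
        (hiff _).mpr ⟨subset_convexHull ℝ _ (hz i), sub_eq_zero.mp h⟩
      rw [hv] at hzF ⊢
      rw [hℓ v hzF]

theorem aux_max {n : ℕ} (γ : Set (Fin n → ℝ)) (hne : γ.Nonempty) (hc : Convex ℝ γ)
    (ℓ : (Fin n → ℝ) →ₗ[ℝ] ℝ) (d : ℝ) (hd : 0 < d) (h : ∀ x ∈ γ, ℓ x = d) :
    {x ∈ DeltaG γ | ∀ y ∈ DeltaG γ, ℓ y ≤ ℓ x} = γ := by
  have hsub : γ ⊆ DeltaG γ := fun x hx => subset_convexHull ℝ _ (Or.inr hx)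
  have hmem : ∀ x ∈ DeltaG γ, ∃ t : ℝ, t ≤ 1 ∧ ∃ y ∈ γ, x = t • y := by
    intro x hx
    rw [DeltaG, Set.singleton_union, convexHull_insert hne, hc.convexHull_eq] at hx
    simp only [convexJoin_singleton_left, Set.mem_iUnion] at hx
    obtain ⟨y, hy, s, t, hs, ht, hst, rfl⟩ := hx
    exact ⟨t, by linarith, y, hy, by simp⟩
  ext x
  constructor
  · rintro ⟨hx, hm⟩
    obtain ⟨t, ht, y, hy, rfl⟩ := hmem x hx
    have := hm y (hsub hy)
    rw [map_smul, h y hy, smul_eq_mul] at this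
    have : t = 1 := le_antisymm ht (by nlinarith)
    rw [this, one_smul]; exact hy
  · intro hx
    refine ⟨hsub hx, fun z hz => ?_⟩
    obtain ⟨t, ht, y, hy, rfl⟩ := hmem z hz
    rw [map_smul, h y hy, h x hx, smul_eq_mul]
    nlinarith

/-- For a face at infinity `γ` of `Γ_∞(f)` there is a unique surjective group homomorphism
`u_γ : M_γ → ℤ` whose `ℝ`-linear extension attains its maximum over `Δ_γ` exactly on `γ`;
moreover this maximum `d_γ` is a strictly positive integer. -/
theorem exists_unique_lattice_conormal {n : ℕ} (f : MvPolynomial (Fin n) ℂ)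
    (γ : Set (Fin n → ℝ)) (hγ : IsFaceOf f γ) (h0 : (0 : Fin n → ℝ) ∉ γ) :
    ∃! u : Mgamma γ →+ ℤ, Function.Surjective u ∧
      ∀ ℓ : (Fin n → ℝ) →ₗ[ℝ] ℝ,
        (∀ v : Mgamma γ, ℓ (fun i => ((v : Fin n → ℤ) i : ℝ)) = u v) →
        {x ∈ DeltaG γ | ∀ y ∈ DeltaG γ, ℓ y ≤ ℓ x} = γ ∧
        ∃ d : ℤ, 0 < d ∧ ∀ x ∈ γ, ℓ x = d := by
  obtain ⟨u0, rfl⟩ := hγ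
  obtain ⟨⟨m, hm, hmx⟩, ⟨v1, hv1⟩, hconv, hext⟩ := aux_face f u0 h0
  set γ := suppFace f u0 with hγdef
  have hγL : ∀ v : Fin n → ℤ, (fun i => (v i : ℝ)) ∈ γ → v ∈ Mgamma γ := fun v hv =>
    Submodule.subset_span (subset_convexHull ℝ _ (Or.inr hv))
  -- the rational functional
  obtain ⟨b, hb⟩ := aux_pi (fun i => u0 i / m)
  obtain ⟨N, c, hN, hc⟩ := aux_clear b
  have hcv : ∀ v : Fin n → ℤ, (fun i => (v i : ℝ)) ∈ γ → ∑ i, c i * v i = N := by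
    intro v hv
    have h1 := hb v (by
      have := hmx _ hv
      simp only [div_mul_eq_mul_div]
      rw [← Finset.sum_div, div_eq_one_iff_eq hm.ne]
      exact this)
    have : ((∑ i, c i * v i : ℤ) : ℚ) = (N : ℚ) := by
      push_cast
      simp only [hc, mul_assoc]
      rw [← Finset.mul_sum, h1, mul_one]
    exact_mod_cast this
  let w : Mgamma γ →+ ℤ := AddMonoidHom.mk' (fun v => ∑ i, c i * (v : Fin n → ℤ) i) (by
    intro a b
    simp [mul_add, Finset.sum_add_distrib])
  have hw : ∀ v : Mgamma γ, (fun i => ((v : Fin n → ℤ) i : ℝ)) ∈ γ → w v = N :=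
    fun v hv => hcv v hv
  obtain ⟨g, u, hg, hu, hwu⟩ := aux_dvd w ⟨v1, hγL v1 hv1⟩ (by rw [hw _ hv1]; exact hN.ne')
  have hug : ∀ v : Mgamma γ, (fun i => ((v : Fin n → ℤ) i : ℝ)) ∈ γ →
      u v = u ⟨v1, hγL v1 hv1⟩ := by
    intro v hv
    have h1 := hwu v
    rw [hw v hv, ← hw ⟨v1, hγL v1 hv1⟩ hv1, hwu ⟨v1, hγL v1 hv1⟩] at h1
    exact (mul_left_cancel₀ hg.ne' h1).symm
  set d : ℤ := u ⟨v1, hγL v1 hv1⟩ with hd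
  have hdpos : 0 < d := by
    have h1 := hwu ⟨v1, hγL v1 hv1⟩
    rw [hw _ hv1] at h1
    have : 0 < g * d := by rw [← h1]; exact hN
    exact pos_of_mul_pos_right this hg.le
  have hval : ∀ ℓ : (Fin n → ℝ) →ₗ[ℝ] ℝ,
      (∀ v : Mgamma γ, ℓ (fun i => ((v : Fin n → ℤ) i : ℝ)) = u v) →
      ∀ x ∈ γ, ℓ x = d := by
    intro ℓ hℓ
    refine hext ℓ d fun v hv => ?_
    rw [hℓ ⟨v, hγL v hv⟩, hug ⟨v, hγL v hv⟩ hv]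
  refine ⟨u, ⟨hu, fun ℓ hℓ => ⟨?_, d, hdpos, hval ℓ hℓ⟩⟩, ?_⟩
  · exact aux_max γ ⟨_, hv1⟩ hconv ℓ d (by exact_mod_cast hdpos) (hval ℓ hℓ)
  · rintro u' ⟨hu', hprop⟩
    obtain ⟨ℓ', hℓ'⟩ := aux_ext _ u'
    obtain ⟨ℓ, hℓ⟩ := aux_ext _ u
    obtain ⟨-, d', hd'pos, hval'⟩ := hprop ℓ' hℓ'
    have hvalℓ := hval ℓ hℓ
    have hspan : ∀ x ∈ Submodule.span ℝ (DeltaG γ), (d : ℝ) * ℓ' x = d' * ℓ x := by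
      have hle : Submodule.span ℝ (DeltaG γ) ≤
          LinearMap.ker ((d : ℝ) • ℓ' - (d' : ℝ) • ℓ) := by
        rw [Submodule.span_le]
        refine convexHull_min ?_ (Submodule.convex _)
        rintro x (hx | hx)
        · rw [Set.mem_singleton_iff] at hx
          rw [hx]; exact Submodule.zero_mem _
        · simp only [SetLike.mem_coe, LinearMap.mem_ker, LinearMap.sub_apply,
            LinearMap.smul_apply, smul_eq_mul]
          rw [hval' x hx, hvalℓ x hx]; ring
      intro x hx
      have := hle hx
      simp only [LinearMap.mem_ker, LinearMap.sub_apply,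
            LinearMap.smul_apply, smul_eq_mul] at this
      linarith
    have huu : ∀ v : Mgamma γ, d * u' v = d' * u v := by
      intro v
      have := hspan _ v.2
      rw [hℓ' v, hℓ v] at this
      exact_mod_cast this
    have hdd : d = d' := by
      obtain ⟨a, ha⟩ := hu 1
      obtain ⟨b, hb⟩ := hu' 1
      have h1 := huu a
      have h2 := huu b
      rw [ha, mul_one] at h1
      rw [hb, mul_one] at h2
      exact Int.dvd_antisymm hdpos.le hd'pos.le ⟨_, h1.symm⟩ ⟨_, h2⟩
    ext v
    have := huu v
    rw [← hdd] at this
    exact mul_left_cancel₀ hdpos.ne' this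
end
end
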